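/- Let W ⊆ ⟦𝕐⟧ with dim_H(W) < 1/2 and let s_I be any pure strategy of Player I. Then P_{s_I}(W) = 0, where P_{s_I} is applied to W as an outer measure (no measurability assumption on W is made). -/

import Mathlib

open Metric Set Filter MeasureTheory

noncomputable local instance : MetricSpace (ℕ → Bool) := PiNat.metricSpace

/-- The play produced when Player I follows the strategy `s` and Player II plays the odd
coordinates of `b`: `Φ_s(b)(n) = s⟨Φ_s(b)(0),…,Φ_s(b)(n-1)⟩` for even `n`, and
`Φ_s(b)(n) = b n` for odd `n`. -/
noncomputable def phi (s : List Bool → Bool) (b : ℕ → Bool) : ℕ → Bool := fun n =>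
  Nat.strongRecOn n fun n ih =>
    if Even n then s (List.ofFn fun i : Fin n => ih i i.isLt) else b n

/-- `μ` is the infinite product over `ℕ` of the uniform probability measure on `{0,1}`:
it gives each cylinder determined by the coordinates in a finite set `s` the
measure `(1/2)^|s|`.  (This characterizes the product measure uniquely.) -/
def IsUniformProduct (μ : Measure (ℕ → Bool)) : Prop :=
  ∀ (s : Finset ℕ) (f : ℕ → Bool), μ {b : ℕ → Bool | ∀ i ∈ s, b i = f i} = (1 / 2) ^ s.card

open scoped ENNReal

/-- Player II's moves are copied unchanged into the play. -/
lemma phi_apply_of_odd (s : List Bool → Bool) (b : ℕ → Bool) {n : ℕ} (hn : Odd n) :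
    phi s b n = b n := by
  unfold phi
  rw [Nat.strongRecOn_eq, if_neg (Nat.not_even_iff_odd.2 hn)]

/-- The law of the play gives every cylinder of length `n` mass at most `2 ^ (-⌊n / 2⌋)`. -/
lemma IsUniformProduct.map_phi_cylinder_le {μ : Measure (ℕ → Bool)} (hμ : IsUniformProduct μ)
    (s : List Bool → Bool) (x : ℕ → Bool) (n : ℕ) :
    μ.map (phi s) (PiNat.cylinder x n) ≤ (1 / 2) ^ (n / 2) := by
  by_cases hs : AEMeasurable (phi s) μ
  swap
  · simp [Measure.map_of_not_aemeasurable hs]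
  rw [Measure.map_apply_of_aemeasurable hs (PiNat.isOpen_cylinder _ x n).measurableSet]
  set t : Finset ℕ := (Finset.range (n / 2)).image (fun k => 2 * k + 1) with ht
  have hcard : t.card = n / 2 := by
    rw [ht, Finset.card_image_of_injective _ (fun a b h => by simpa using h), Finset.card_range]
  rw [← hcard, ← hμ t x]
  refine measure_mono fun b hb i hi => ?_
  obtain ⟨k, hk, rfl⟩ := Finset.mem_image.1 hi
  rw [← phi_apply_of_odd s b ⟨k, rfl⟩]
  exact PiNat.mem_cylinder_iff.1 hb _ (by have := Finset.mem_range.1 hk; omega)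

/-- A set with at least two points lies in a cylinder whose length `n` satisfies
`2 ^ (-n) ≤ ediam U`. -/
lemma exists_subset_cylinder_of_nontrivial {U : Set (ℕ → Bool)} (hU : U.Nontrivial) :
    ∃ x n, U ⊆ PiNat.cylinder x n ∧ (1 / 2 : ℝ≥0∞) ^ n ≤ ediam U := by
  classical
  have hex : ∃ n, ∃ x ∈ U, ∃ y ∈ U, x ≠ y ∧ PiNat.firstDiff x y = n := by
    obtain ⟨x, hx, y, hy, hxy⟩ := hU
    exact ⟨_, x, hx, y, hy, hxy, rfl⟩
  obtain ⟨x, hx, y, hy, hxy, hn⟩ := Nat.find_spec hex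
  refine ⟨x, Nat.find hex, fun z hz => ?_, ?_⟩
  · by_cases hzx : z = x
    · exact hzx ▸ PiNat.self_mem_cylinder z _
    · exact (PiNat.mem_cylinder_iff_le_firstDiff hzx _).2
        (Nat.find_min' hex ⟨z, hz, x, hx, hzx, rfl⟩)
  · refine le_trans (le_of_eq ?_) (edist_le_ediam_of_mem hx hy)
    rw [edist_dist, PiNat.dist_eq_of_ne hxy, hn, ENNReal.ofReal_pow (by norm_num)]
    congr 1
    rw [ENNReal.ofReal_div_of_pos (by norm_num)]
    simp

lemma half_mul_half_pow_div_two_le (n : ℕ) :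
    (1 / 2 : ℝ≥0∞) * (1 / 2) ^ (n / 2) ≤ ((1 / 2) ^ n) ^ (1 / 2 : ℝ) := by
  have h : (1 / 2 : ℝ≥0∞) ≤ 1 := by simp
  rw [← pow_succ', ← ENNReal.rpow_natCast, ← ENNReal.rpow_natCast, ← ENNReal.rpow_mul]
  refine ENNReal.rpow_le_rpow_of_exponent_ge h ?_
  have : n ≤ 2 * (n / 2 + 1) := by omega
  have : (n : ℝ) ≤ 2 * ((n / 2 + 1 : ℕ) : ℝ) := by exact_mod_cast this
  linarith

/-- The law of the play gives every subsingleton measure zero. -/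
lemma IsUniformProduct.map_phi_subsingleton {μ : Measure (ℕ → Bool)} (hμ : IsUniformProduct μ)
    (s : List Bool → Bool) {U : Set (ℕ → Bool)} (hU : U.Subsingleton) :
    μ.map (phi s) U = 0 := by
  rcases hU.eq_empty_or_singleton with rfl | ⟨x, rfl⟩
  · exact measure_empty
  have hlim : Tendsto (fun n : ℕ => (1 / 2 : ℝ≥0∞) ^ n) atTop (nhds 0) :=
    ENNReal.tendsto_pow_atTop_nhds_zero_of_lt_one (by simp)
  refine le_antisymm (ge_of_tendsto' hlim fun n => ?_) zero_le
  have h := hμ.map_phi_cylinder_le s x (2 * n)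
  rw [Nat.mul_div_cancel_left n two_pos] at h
  exact (measure_mono (singleton_subset_iff.2 (PiNat.self_mem_cylinder x _))).trans h

/-- Up to the factor `1 / 2`, the law of the play is dominated by the Hausdorff measure of
dimension `1 / 2`. -/
lemma IsUniformProduct.half_smul_map_phi_le_hausdorffMeasure {μ : Measure (ℕ → Bool)}
    (hμ : IsUniformProduct μ) (s : List Bool → Bool) :
    (1 / 2 : ℝ≥0∞) • μ.map (phi s) ≤ Measure.hausdorffMeasure (1 / 2 : ℝ) := by
  refine Measure.le_hausdorffMeasure _ _ 1 one_pos fun U _ => ?_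
  rw [Measure.smul_apply, smul_eq_mul]
  rcases U.subsingleton_or_nontrivial with hU | hU
  · simp [hμ.map_phi_subsingleton s hU]
  obtain ⟨x, n, hsub, hdiam⟩ := exists_subset_cylinder_of_nontrivial hU
  calc (1 / 2 : ℝ≥0∞) * μ.map (phi s) U
      ≤ 1 / 2 * (1 / 2) ^ (n / 2) := by
        gcongr
        exact (measure_mono hsub).trans (hμ.map_phi_cylinder_le s x n)
    _ ≤ ((1 / 2) ^ n) ^ (1 / 2 : ℝ) := half_mul_half_pow_div_two_le n
    _ ≤ ediam U ^ (1 / 2 : ℝ) := by gcongr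

/-- If `dim_H W < 1/2`, then for every Player I pure strategy `sI` the law
`P_{sI}` of the play when Player II tosses fair coins — i.e. the pushforward under
`Φ_{sI}` of the uniform product measure — gives `W` outer measure `0`. -/
theorem randomII_beats_sI (W : Set (ℕ → Bool)) (hW : dimH W < 1 / 2)
    (sI : List Bool → Bool) (μ : Measure (ℕ → Bool)) (hμ : IsUniformProduct μ) :
    μ.map (phi sI) W = 0 := by
  have hW' : dimH W < ((1 / 2 : NNReal) : ℝ≥0∞) := by simpa using hW
  have hH := hausdorffMeasure_of_dimH_lt hW'
  have hle := hμ.half_smul_map_phi_le_hausdorffMeasure sI W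
  rw [show (1 / 2 : ℝ) = ((1 / 2 : NNReal) : ℝ) by simp, hH, Measure.smul_apply,
    smul_eq_mul] at hle
  simpa using hle
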